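/- For every w > 0 and every real y with -1 ≤ y < 1: ∑_{l=0}^∞ (2l+1)·P_l(y)/(l(l+1)+w) = 1/w - ∑_{l=1}^∞ [(2l+1)/(l(l+1)) - (2l+1)/(l(l+1)+w)]·P_l(y) - log((e/2)·(1-y)), where both series converge. Equivalently, the Green's function G of the screened Poisson equation on the sphere satisfies the exact split representation G = -(1/4πw) - (1/4π)·∑_{l=1}^∞ [(2l+1)/(l(l+1)+w) - (2l+1)/(l(l+1))]·P_l(y) + (1/4π)·log((e/2)(1-y)). -/

import Mathlib

open Filter Topology

/-- The Legendre polynomials `P l` on `ℝ`, i.e. the orthogonal polynomials on `[-1,1]`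
normalized by `P l 1 = 1`, defined via the Bonnet recurrence
`P 0 y = 1`, `P 1 y = y`, `(n+2) • P (n+2) y = (2n+3) y P (n+1) y - (n+1) P n y`. -/
noncomputable def legendreP : ℕ → ℝ → ℝ
  | 0, _ => 1
  | 1, y => y
  | (n + 2), y =>
      ((2 * (n : ℝ) + 3) * y * legendreP (n + 1) y - ((n : ℝ) + 1) * legendreP n y) / ((n : ℝ) + 2)

/-!
Termwise, the screened and unscreened coefficients differ by `O(l⁻²)`, so everything reduces to
`∑_{l ≥ 1} (2l+1)/(l(l+1)) P_l(y) = -log((e/2)(1-y))`. Bonnet's recurrence makes the quadratic form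
`P_{n+1}² - 2y P_n P_{n+1} + P_n²` nonincreasing in `n`, whence `|P_n| ≤ 1` on `[-1,1]`, and turns
the generating function into the solution `(1 - 2yr + r²)^{-1/2}` of a linear ODE. Integrating
`∑ (P_n + P_{n+1}) r^n` gives `-2 log((1 - r + √(1 - 2yr + r²))/2)`. As
`(2l+1)/(l(l+1)) = 1/l + 1/(l+1)`, its coefficients `(P_n + P_{n+1})/(n+1)` have the partial sums of
the unscreened series up to `1 - P_N/(N+1)`. After multiplication by `1 - y` the unscreened series
is an absolutely convergent series plus a telescoping one, so it converges for `y < 1`, and Abel's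
theorem at `r → 1` evaluates it.
-/

@[simp]
lemma legendreP_zero (y : ℝ) : legendreP 0 y = 1 := by
  rw [legendreP]

@[simp]
lemma legendreP_one (y : ℝ) : legendreP 1 y = y := by
  rw [legendreP]

lemma legendreP_succ_succ_sub (n : ℕ) (y : ℝ) :
    ((n : ℝ) + 2) * (legendreP (n + 2) y - y * legendreP (n + 1) y) =
      ((n : ℝ) + 1) * (y * legendreP (n + 1) y - legendreP n y) := by
  rw [legendreP]
  field_simp
  ring

lemma legendreP_succ_sub_sq_add_le (n : ℕ) (y : ℝ) :
    (legendreP (n + 1) y - y * legendreP n y) ^ 2 + (1 - y ^ 2) * legendreP n y ^ 2 ≤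
      1 - y ^ 2 := by
  induction n with
  | zero => simp
  | succ n ih =>
    have hcontract : (legendreP (n + 2) y - y * legendreP (n + 1) y) ^ 2 ≤
        (y * legendreP (n + 1) y - legendreP n y) ^ 2 := by
      have hratio : legendreP (n + 2) y - y * legendreP (n + 1) y =
          ((n : ℝ) + 1) / (n + 2) * (y * legendreP (n + 1) y - legendreP n y) := by
        rw [div_mul_eq_mul_div, eq_div_iff (by positivity), mul_comm, legendreP_succ_succ_sub]
      rw [hratio, mul_pow]
      refine mul_le_of_le_one_left (sq_nonneg _) (pow_le_one₀ (by positivity) ?_)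
      rw [div_le_one (by positivity)]
      linarith
    linarith

lemma abs_legendreP_le_one {y : ℝ} (hy : |y| ≤ 1) (n : ℕ) : |legendreP n y| ≤ 1 := by
  rw [← sq_le_one_iff_abs_le_one]
  rcases ((sq_le_one_iff_abs_le_one y).2 hy).lt_or_eq with hlt | heq
  · have := legendreP_succ_sub_sq_add_le n y
    nlinarith [sq_nonneg (legendreP (n + 1) y - y * legendreP n y)]
  · induction n with
    | zero => simp
    | succ n ih =>
      have hstep : legendreP (n + 1) y - y * legendreP n y = 0 := by
        have := legendreP_succ_sub_sq_add_le n y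
        rw [heq, sub_self, zero_mul, add_zero] at this
        exact pow_eq_zero_iff two_ne_zero |>.1 (le_antisymm this (sq_nonneg _))
      rwa [sub_eq_zero.1 hstep, mul_pow, heq, one_mul]

lemma summable_mul_pow_of_abs_le {a : ℕ → ℝ} {C : ℝ} (ha : ∀ n, |a n| ≤ C * (n + 1)) {r : ℝ}
    (hr : |r| < 1) : Summable fun n => a n * r ^ n := by
  have hlinear := summable_pow_mul_geometric_of_norm_lt_one 1 (r := |r|) (by simpa using hr)
  have hconst := summable_geometric_of_lt_one (abs_nonneg r) hr
  refine .of_norm_bounded ((hlinear.add hconst).mul_left C) fun n => ?_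
  rw [Real.norm_eq_abs, abs_mul, abs_pow]
  calc |a n| * |r| ^ n ≤ C * (n + 1) * |r| ^ n := by gcongr; exact ha n
    _ = C * ((n : ℝ) ^ 1 * |r| ^ n + |r| ^ n) := by ring

lemma hasDerivAt_tsum_div_mul_pow_succ {𝕜 : Type*} [RCLike 𝕜] {a : ℕ → 𝕜} {ρ : ℝ}
    (ha : Summable fun n => ‖a n‖ * ρ ^ n) {z : 𝕜} (hz : ‖z‖ < ρ) :
    HasDerivAt (fun z => ∑' n, a n / (n + 1) * z ^ (n + 1)) (∑' n, a n * z ^ n) z := by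
  refine hasDerivAt_tsum_of_isPreconnected (g := fun n z => a n / (n + 1) * z ^ (n + 1))
    (g' := fun n z => a n * z ^ n) ha Metric.isOpen_ball (convex_ball (0 : 𝕜) ρ).isPreconnected
    (fun n x _ => ?_) (fun n x hx => ?_)
    (Metric.mem_ball_self ((norm_nonneg z).trans_lt hz)) ?_ (mem_ball_zero_iff.2 hz)
  · have hn : (n : 𝕜) + 1 ≠ 0 := Nat.cast_add_one_ne_zero n
    refine ((hasDerivAt_pow (n + 1) x).const_mul (a n / (n + 1))).congr_deriv ?_
    simp only [Nat.cast_add, Nat.cast_one, Nat.add_sub_cancel]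
    field_simp
  · rw [norm_mul, norm_pow]
    gcongr
    exact (mem_ball_zero_iff.1 hx).le
  · simp only [zero_pow (Nat.succ_ne_zero _), mul_zero, summable_zero]

section GeneratingFunction

variable {y r : ℝ}

lemma one_sub_two_mul_add_sq_pos (hy : |y| ≤ 1) (hr : |r| < 1) : 0 < 1 - 2 * y * r + r ^ 2 := by
  have hyr : |y * r| < 1 := by
    rw [abs_mul]
    exact (mul_le_of_le_one_left (abs_nonneg r) hy).trans_lt hr
  nlinarith [(abs_lt.1 hyr).2, (sq_le_one_iff_abs_le_one y).2 hy, sq_nonneg r]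

lemma one_sub_add_sqrt_pos (hr : |r| < 1) : 0 < 1 - r + √(1 - 2 * y * r + r ^ 2) :=
  add_pos_of_pos_of_nonneg (sub_pos.2 (abs_lt.1 hr).2) (Real.sqrt_nonneg _)

lemma hasDerivAt_sqrt_one_sub_two_mul_add_sq (h : 0 < 1 - 2 * y * r + r ^ 2) :
    HasDerivAt (fun r => √(1 - 2 * y * r + r ^ 2)) ((r - y) / √(1 - 2 * y * r + r ^ 2)) r := by
  have hq : HasDerivAt (fun r => 1 - 2 * y * r + r ^ 2) (2 * (r - y)) r := by
    refine ((((hasDerivAt_id r).const_mul (2 * y)).const_sub 1).add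
      ((hasDerivAt_id r).pow 2)).congr_deriv ?_
    simp only [id_eq, Nat.cast_ofNat, pow_one, Nat.add_one_sub_one]
    ring
  refine (hq.sqrt h.ne').congr_deriv ?_
  rw [mul_div_mul_left _ _ two_ne_zero]

lemma summable_legendreP_mul_pow (hy : |y| ≤ 1) (hr : |r| < 1) :
    Summable fun n => legendreP n y * r ^ n :=
  summable_mul_pow_of_abs_le (C := 1)
    (fun n => (abs_legendreP_le_one hy n).trans (by simp)) hr

lemma abs_succ_mul_legendreP_succ_le (hy : |y| ≤ 1) (n : ℕ) :
    |((n : ℝ) + 1) * legendreP (n + 1) y| ≤ 1 * (n + 1) := by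
  rw [abs_mul, abs_of_pos (by positivity), mul_comm]
  gcongr
  exact abs_legendreP_le_one hy _

lemma hasDerivAt_tsum_legendreP_mul_pow (hy : |y| ≤ 1) (hr : |r| < 1) :
    HasDerivAt (fun r => ∑' n, legendreP n y * r ^ n)
      (∑' n : ℕ, ((n : ℝ) + 1) * legendreP (n + 1) y * r ^ n) r := by
  obtain ⟨ρ, hrρ, hρ⟩ := exists_between hr
  have hsum : Summable fun n : ℕ => ‖((n : ℝ) + 1) * legendreP (n + 1) y‖ * ρ ^ n :=
    summable_mul_pow_of_abs_le (fun n => by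
      rw [Real.norm_eq_abs, abs_abs]; exact abs_succ_mul_legendreP_succ_le hy n)
      (by rwa [abs_of_pos ((abs_nonneg r).trans_lt hrρ)])
  refine ((hasDerivAt_tsum_div_mul_pow_succ hsum hrρ).const_add 1).congr_of_eventuallyEq ?_
  filter_upwards [isOpen_lt continuous_abs continuous_const |>.mem_nhds hr] with x hx
  rw [(summable_legendreP_mul_pow hy hx).tsum_eq_zero_add]
  simp only [legendreP_zero, pow_zero, mul_one]
  congr! 3 with n
  field_simp

lemma tsum_succ_mul_legendreP_succ_mul_pow (hy : |y| ≤ 1) (hr : |r| < 1) :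
    (1 - 2 * y * r + r ^ 2) * ∑' n : ℕ, ((n : ℝ) + 1) * legendreP (n + 1) y * r ^ n =
      (y - r) * ∑' n, legendreP n y * r ^ n := by
  set D := ∑' n : ℕ, ((n : ℝ) + 1) * legendreP (n + 1) y * r ^ n
  set G := ∑' n, legendreP n y * r ^ n
  have hD : HasSum (fun n : ℕ => ((n : ℝ) + 1) * legendreP (n + 1) y * r ^ n) D :=
    (summable_mul_pow_of_abs_le (abs_succ_mul_legendreP_succ_le hy) hr).hasSum
  have hG : HasSum (fun n => legendreP n y * r ^ n) G := (summable_legendreP_mul_pow hy hr).hasSum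
  have hrD : HasSum (fun n : ℕ => (n : ℝ) * legendreP n y * r ^ n) (r * D) := by
    refine (hasSum_nat_add_iff' 1).1 ?_
    simpa [pow_succ', mul_left_comm] using hD.mul_left r
  have hrec : HasSum (fun n : ℕ => ((n : ℝ) + 2) * legendreP (n + 2) y * r ^ (n + 1))
      (2 * y * r * D + y * (G - 1) - r * (r * D) - r * G) := by
    have hG' : HasSum (fun n => legendreP (n + 1) y * r ^ (n + 1)) (G - 1) := by
      simpa using (hasSum_nat_add_iff' 1).2 hG
    refine ((((hD.mul_left (2 * y * r)).add (hG'.mul_left y)).sub (hrD.mul_left r)).sub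
      (hG.mul_left r)).congr_fun fun n => ?_
    linear_combination r ^ (n + 1) * legendreP_succ_succ_sub n y
  have hshift : HasSum (fun n : ℕ => ((n : ℝ) + 2) * legendreP (n + 2) y * r ^ (n + 1))
      (D - y) := by
    simpa [add_assoc, one_add_one_eq_two] using (hasSum_nat_add_iff' 1).2 hD
  linear_combination hshift.unique hrec

theorem tsum_legendreP_mul_pow (hy : |y| ≤ 1) (hr : |r| < 1) :
    ∑' n, legendreP n y * r ^ n = 1 / √(1 - 2 * y * r + r ^ 2) := by
  have hderiv : ∀ x ∈ Metric.ball (0 : ℝ) 1, HasDerivAt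
      (fun x => √(1 - 2 * y * x + x ^ 2) * ∑' n, legendreP n y * x ^ n) 0 x := by
    intro x hx
    have hx : |x| < 1 := mem_ball_zero_iff.1 hx
    have hq := one_sub_two_mul_add_sq_pos hy hx
    refine ((hasDerivAt_sqrt_one_sub_two_mul_add_sq hq).mul
      (hasDerivAt_tsum_legendreP_mul_pow hy hx)).congr_deriv ?_
    have hode := tsum_succ_mul_legendreP_succ_mul_pow hy hx
    rw [← Real.mul_self_sqrt hq.le] at hode
    have hR := Real.sqrt_pos.2 hq
    generalize √(1 - 2 * y * x + x ^ 2) = R at hode hR ⊢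
    field_simp
    linear_combination hode
  have hconst := Metric.isOpen_ball.is_const_of_deriv_eq_zero (convex_ball (0 : ℝ) 1).isPreconnected
    (fun x hx => (hderiv x hx).differentiableAt.differentiableWithinAt)
    (fun x hx => (hderiv x hx).deriv) (mem_ball_zero_iff.2 hr) (Metric.mem_ball_self one_pos)
  have hzero : ∑' n, legendreP n y * (0 : ℝ) ^ n = 1 := by
    rw [tsum_eq_single 0 fun n hn => by rw [zero_pow hn, mul_zero]]
    simp
  rw [eq_div_iff (Real.sqrt_pos.2 (one_sub_two_mul_add_sq_pos hy hr)).ne', mul_comm, hconst, hzero]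
  simp

end GeneratingFunction

section LogSeries

variable {y r : ℝ}

lemma tsum_legendreP_add_succ_mul_pow (hy : |y| ≤ 1) (hr : |r| < 1) :
    ∑' n, (legendreP n y + legendreP (n + 1) y) * r ^ n =
      2 * (√(1 - 2 * y * r + r ^ 2) - r + y) /
        (√(1 - 2 * y * r + r ^ 2) * (1 - r + √(1 - 2 * y * r + r ^ 2))) := by
  rcases eq_or_ne r 0 with rfl | hr0
  · rw [tsum_eq_single 0 fun n hn => by rw [zero_pow hn, mul_zero]]
    norm_num
  have hG := summable_legendreP_mul_pow hy hr
  have hG₁ : Summable fun n => legendreP (n + 1) y * r ^ n :=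
    summable_mul_pow_of_abs_le (C := 1) (fun n => (abs_legendreP_le_one hy _).trans (by simp)) hr
  have hsplit : ∑' n, (legendreP n y + legendreP (n + 1) y) * r ^ n =
      ∑' n, legendreP n y * r ^ n + ∑' n, legendreP (n + 1) y * r ^ n := by
    rw [← hG.tsum_add hG₁]
    simp only [add_mul]
  have hshift : ∑' n, legendreP n y * r ^ n = 1 + r * ∑' n, legendreP (n + 1) y * r ^ n := by
    rw [hG.tsum_eq_zero_add, ← tsum_mul_left]
    simp only [legendreP_zero, pow_succ', mul_left_comm, pow_zero, mul_one]
  have hq := one_sub_two_mul_add_sq_pos hy hr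
  have hR := Real.sqrt_pos.2 hq
  have hden := one_sub_add_sqrt_pos hr (y := y)
  have hRsq := Real.sq_sqrt hq.le
  rw [tsum_legendreP_mul_pow hy hr] at hsplit hshift
  generalize √(1 - 2 * y * r + r ^ 2) = R at *
  have hclear : ∀ s : ℝ, (1 / R + s) * (R * (1 - r + R)) = (1 + R * s) * (1 - r + R) := by
    intro s
    field_simp
  rw [div_eq_iff hR.ne'] at hshift
  rw [hsplit, eq_div_iff (by positivity), hclear]
  refine mul_left_cancel₀ hr0 ?_
  linear_combination -(1 - r + R) * hshift - hRsq

lemma hasDerivAt_log_one_sub_add_sqrt (hy : |y| ≤ 1) (hr : |r| < 1) :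
    HasDerivAt (fun r => -2 * Real.log ((1 - r + √(1 - 2 * y * r + r ^ 2)) / 2))
      (2 * (√(1 - 2 * y * r + r ^ 2) - r + y) /
        (√(1 - 2 * y * r + r ^ 2) * (1 - r + √(1 - 2 * y * r + r ^ 2)))) r := by
  have hq := one_sub_two_mul_add_sq_pos hy hr
  have hR := Real.sqrt_pos.2 hq
  have hden := one_sub_add_sqrt_pos hr (y := y)
  have hinner :=
    ((hasDerivAt_id' r).const_sub 1).fun_add (hasDerivAt_sqrt_one_sub_two_mul_add_sq hq)
  refine (((hinner.div_const 2).log (by positivity)).const_mul (-2)).congr_deriv ?_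
  generalize √(1 - 2 * y * r + r ^ 2) = R at *
  field_simp
  ring

theorem tsum_legendreP_add_succ_div_mul_pow_succ (hy : |y| ≤ 1) (hr : |r| < 1) :
    ∑' n : ℕ, (legendreP n y + legendreP (n + 1) y) / (n + 1) * r ^ (n + 1) =
      -2 * Real.log ((1 - r + √(1 - 2 * y * r + r ^ 2)) / 2) := by
  have hseries : ∀ x ∈ Metric.ball (0 : ℝ) 1, HasDerivAt
      (fun r => ∑' n : ℕ, (legendreP n y + legendreP (n + 1) y) / (n + 1) * r ^ (n + 1))
      (∑' n, (legendreP n y + legendreP (n + 1) y) * x ^ n) x := by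
    intro x hx
    obtain ⟨ρ, hxρ, hρ⟩ := exists_between (mem_ball_zero_iff.1 hx)
    refine hasDerivAt_tsum_div_mul_pow_succ (summable_mul_pow_of_abs_le (C := 2) (fun n => ?_)
      (by rwa [abs_of_pos ((norm_nonneg x).trans_lt hxρ)])) hxρ
    calc |‖legendreP n y + legendreP (n + 1) y‖| ≤ 1 + 1 := by
          rw [abs_norm]
          exact norm_add_le_of_le (abs_legendreP_le_one hy _) (abs_legendreP_le_one hy _)
      _ ≤ 2 * ((n : ℝ) + 1) := by linarith [n.cast_nonneg (α := ℝ)]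
  have hlog : ∀ x ∈ Metric.ball (0 : ℝ) 1, HasDerivAt
      (fun r => -2 * Real.log ((1 - r + √(1 - 2 * y * r + r ^ 2)) / 2))
      (∑' n, (legendreP n y + legendreP (n + 1) y) * x ^ n) x := by
    intro x hx
    have hx : |x| < 1 := mem_ball_zero_iff.1 hx
    rw [tsum_legendreP_add_succ_mul_pow hy hx]
    exact hasDerivAt_log_one_sub_add_sqrt hy hx
  refine Metric.isOpen_ball.eqOn_of_deriv_eq (convex_ball (0 : ℝ) 1).isPreconnected
    (fun x hx => (hseries x hx).differentiableAt.differentiableWithinAt)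
    (fun x hx => (hlog x hx).differentiableAt.differentiableWithinAt)
    (fun x hx => (hseries x hx).deriv.trans (hlog x hx).deriv.symm)
    (Metric.mem_ball_self one_pos) ?_ (mem_ball_zero_iff.2 hr)
  norm_num

end LogSeries

section UnscreenedSeries

lemma one_sub_mul_legendreP_succ (l : ℕ) (y : ℝ) :
    (1 - y) * ((2 * ((l : ℝ) + 1) + 1) / ((l + 1) * ((l + 1) + 1)) * legendreP (l + 1) y) =
      2 / (((l : ℝ) + 1) * (l + 3)) * (legendreP (l + 1) y - legendreP (l + 2) y) +
        ((legendreP (l + 1) y - legendreP (l + 2) y) / (l + 3) -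
          (legendreP l y - legendreP (l + 1) y) / (l + 2)) := by
  have hbonnet := legendreP_succ_succ_sub l y
  field_simp
  linear_combination ((l : ℝ) + 3) * ((l : ℝ) + 2) * hbonnet

lemma tendsto_div_add_atTop_nhds_zero {a : ℕ → ℝ} {C : ℝ} (ha : ∀ n, |a n| ≤ C) (k : ℝ) :
    Tendsto (fun n : ℕ => a n / (n + k)) atTop (𝓝 0) :=
  tendsto_bdd_div_atTop_nhds_zero (.of_forall fun n => (abs_le.1 (ha n)).1)
    (.of_forall fun n => (abs_le.1 (ha n)).2)
    (tendsto_atTop_add_const_right _ _ tendsto_natCast_atTop_atTop)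

lemma summable_div_succ_sq (C : ℝ) : Summable fun l : ℕ => C / ((l : ℝ) + 1) ^ 2 := by
  have hsq := (summable_nat_add_iff 1).2 (Real.summable_one_div_nat_pow.2 one_lt_two)
  simpa [div_eq_mul_inv] using hsq.mul_left C

lemma exists_tendsto_sum_legendreP {y : ℝ} (hy : -1 ≤ y) (hy' : y < 1) :
    ∃ S, Tendsto (fun N : ℕ => ∑ l ∈ Finset.range N,
      (2 * ((l : ℝ) + 1) + 1) / ((l + 1) * ((l + 1) + 1)) * legendreP (l + 1) y) atTop (𝓝 S) := by
  have hyabs : |y| ≤ 1 := abs_le.2 ⟨hy, hy'.le⟩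
  have hdiff : ∀ n, ‖legendreP n y - legendreP (n + 1) y‖ ≤ 2 := fun n =>
    (norm_sub_le_of_le (abs_legendreP_le_one hyabs n) (abs_legendreP_le_one hyabs (n + 1))).trans_eq
      one_add_one_eq_two
  have hsummable : Summable fun l : ℕ =>
      2 / (((l : ℝ) + 1) * (l + 3)) * (legendreP (l + 1) y - legendreP (l + 2) y) := by
    refine .of_norm_bounded (summable_div_succ_sq 4) fun l => ?_
    rw [norm_mul, Real.norm_of_nonneg (by positivity)]
    calc 2 / (((l : ℝ) + 1) * (l + 3)) * ‖legendreP (l + 1) y - legendreP (l + 2) y‖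
        ≤ 2 / (((l : ℝ) + 1) * (l + 1)) * 2 := by
          gcongr
          · norm_num
          · exact hdiff (l + 1)
      _ = 4 / ((l : ℝ) + 1) ^ 2 := by ring
  have htelescope : Tendsto (fun N : ℕ => ∑ l ∈ Finset.range N,
      ((legendreP (l + 1) y - legendreP (l + 2) y) / ((l : ℝ) + 3) -
        (legendreP l y - legendreP (l + 1) y) / (l + 2))) atTop (𝓝 (0 - (1 - y) / 2)) := by
    refine ((tendsto_div_add_atTop_nhds_zero hdiff 2).sub_const ((1 - y) / 2)).congr fun N => ?_
    have hsum := Finset.sum_range_sub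
      (fun n : ℕ => (legendreP n y - legendreP (n + 1) y) / ((n : ℝ) + 2)) N
    simp only [Nat.cast_add, Nat.cast_one, add_assoc, Nat.cast_zero, zero_add, legendreP_zero,
      legendreP_one] at hsum
    rw [← hsum]
    norm_num
  refine ⟨_, ((hsummable.hasSum.tendsto_sum_nat.add htelescope).div_const (1 - y)).congr
    fun N => ?_⟩
  rw [div_eq_iff (by linarith), mul_comm, Finset.mul_sum, ← Finset.sum_add_distrib]
  exact Finset.sum_congr rfl fun l _ => (one_sub_mul_legendreP_succ l y).symm

lemma sum_legendreP_add_succ_div (y : ℝ) (N : ℕ) :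
    ∑ n ∈ Finset.range N, (legendreP n y + legendreP (n + 1) y) / ((n : ℝ) + 1) =
      ∑ l ∈ Finset.range N,
        (2 * ((l : ℝ) + 1) + 1) / ((l + 1) * ((l + 1) + 1)) * legendreP (l + 1) y +
          (1 - legendreP N y / (N + 1)) := by
  induction N with
  | zero => simp
  | succ N ih =>
    rw [Finset.sum_range_succ, Finset.sum_range_succ, ih]
    push_cast
    field_simp
    ring

lemma eq_of_tendsto_sum_of_tsum_mul_pow_succ_eq {a : ℕ → ℝ} {f : ℝ → ℝ} {S : ℝ}
    (hS : Tendsto (fun N => ∑ n ∈ Finset.range N, a n) atTop (𝓝 S)) (hf : ContinuousAt f 1)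
    (haf : ∀ r ∈ Set.Ioo (0 : ℝ) 1, ∑' n, a n * r ^ (n + 1) = f r) : S = f 1 := by
  have habel : Tendsto (fun r => r * ∑' n, a n * r ^ n) (𝓝[<] 1) (𝓝 (1 * S)) :=
    (tendsto_id'.2 nhdsWithin_le_nhds).mul (Real.tendsto_tsum_powerSeries_nhdsWithin_lt hS)
  rw [one_mul] at habel
  refine tendsto_nhds_unique (habel.congr' ?_) (hf.tendsto.mono_left nhdsWithin_le_nhds)
  filter_upwards [Ioo_mem_nhdsLT (zero_lt_one' ℝ)] with r hr
  rw [← haf r hr, ← tsum_mul_left]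
  simp only [pow_succ', mul_left_comm]

lemma neg_two_mul_log_sqrt_two_mul_div_two {x : ℝ} (hx : 0 < x) :
    -2 * Real.log (√(2 * x) / 2) = 1 - Real.log (Real.exp 1 / 2 * x) := by
  rw [Real.log_mul (by positivity) hx.ne', Real.log_div (Real.exp_ne_zero 1) two_ne_zero,
    Real.log_exp, Real.log_div (by positivity) two_ne_zero, Real.log_sqrt (by positivity),
    Real.log_mul two_ne_zero hx.ne']
  ring

theorem tendsto_sum_legendreP {y : ℝ} (hy : -1 ≤ y) (hy' : y < 1) :
    Tendsto (fun N : ℕ => ∑ l ∈ Finset.range N,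
      (2 * ((l : ℝ) + 1) + 1) / ((l + 1) * ((l + 1) + 1)) * legendreP (l + 1) y) atTop
      (𝓝 (-Real.log (Real.exp 1 / 2 * (1 - y)))) := by
  have hyabs : |y| ≤ 1 := abs_le.2 ⟨hy, hy'.le⟩
  obtain ⟨S, hS⟩ := exists_tendsto_sum_legendreP hy hy'
  have hpartial : Tendsto (fun N : ℕ => ∑ n ∈ Finset.range N,
      (legendreP n y + legendreP (n + 1) y) / ((n : ℝ) + 1)) atTop (𝓝 (S + (1 - 0))) := by
    simp only [sum_legendreP_add_succ_div]
    exact hS.add ((tendsto_div_add_atTop_nhds_zero (abs_legendreP_le_one hyabs) 1).const_sub 1)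
  have hvalue := eq_of_tendsto_sum_of_tsum_mul_pow_succ_eq hpartial
    (f := fun r => -2 * Real.log ((1 - r + √(1 - 2 * y * r + r ^ 2)) / 2)) ?_ fun r hr =>
      tsum_legendreP_add_succ_div_mul_pow_succ hyabs (abs_lt.2 ⟨by linarith [hr.1], hr.2⟩)
  · have hone : (1 - 1 + √(1 - 2 * y * 1 + 1 ^ 2)) / 2 = √(2 * (1 - y)) / 2 := by ring_nf
    rw [hone, neg_two_mul_log_sqrt_two_mul_div_two (sub_pos.2 hy')] at hvalue
    rwa [show -Real.log (Real.exp 1 / 2 * (1 - y)) = S by linarith]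
  · have hpos : 0 < √(1 - 2 * y * 1 + 1 ^ 2) := Real.sqrt_pos.2 (by linarith)
    exact (ContinuousAt.log (by fun_prop) (by rw [sub_self, zero_add]; positivity)).const_mul (-2)

end UnscreenedSeries

section Screened

lemma div_sub_div_add {K : Type*} [Field K] {a b : K} (ha : a ≠ 0) (hab : a + b ≠ 0) (c : K) :
    c / a - c / (a + b) = c * b / (a * (a + b)) := by
  field_simp
  ring

variable {𝕜 : Type*} [RCLike 𝕜] {w : 𝕜}

lemma natCast_le_norm_mul_succ_add {k : ℕ} (hk : ‖w‖ ≤ (k : ℝ) ^ 2) :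
    (k : ℝ) ≤ ‖(k : 𝕜) * (k + 1) + w‖ := by
  have hnorm : ‖(k : 𝕜) * (k + 1)‖ = (k : ℝ) * (k + 1) := by
    exact_mod_cast RCLike.norm_natCast (K := 𝕜) (k * (k + 1))
  linarith [norm_sub_le_norm_add ((k : 𝕜) * (k + 1)) w]

lemma norm_mul_div_screened_le {k : ℕ} (hk : ‖w‖ ≤ (k : ℝ) ^ 2) :
    ‖(2 * (k : 𝕜) + 1) * w / (k * (k + 1) * (k * (k + 1) + w))‖ ≤ 2 * ‖w‖ / (k : ℝ) ^ 2 := by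
  rcases k.eq_zero_or_pos with rfl | hpos
  · simp
  have hnum : ‖2 * (k : 𝕜) + 1‖ = 2 * (k : ℝ) + 1 := by
    exact_mod_cast RCLike.norm_natCast (K := 𝕜) (2 * k + 1)
  have hsucc : ‖(k : 𝕜) + 1‖ = (k : ℝ) + 1 := by
    exact_mod_cast RCLike.norm_natCast (K := 𝕜) (k + 1)
  rw [norm_div, norm_mul, norm_mul, norm_mul, hnum, hsucc, RCLike.norm_natCast]
  calc (2 * (k : ℝ) + 1) * ‖w‖ / (k * (k + 1) * ‖(k : 𝕜) * (k + 1) + w‖)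
      ≤ 2 * ((k : ℝ) + 1) * ‖w‖ / (k * (k + 1) * k) := by
        gcongr
        · linarith
        · exact natCast_le_norm_mul_succ_add hk
    _ = 2 * ‖w‖ / (k : ℝ) ^ 2 := by field_simp

lemma summable_screened_coeff_sub_mul (hw : ∀ l : ℕ, (l : 𝕜) * ((l : 𝕜) + 1) + w ≠ 0) {a : ℕ → 𝕜}
    {C : ℝ} (ha : ∀ l, ‖a l‖ ≤ C) :
    Summable fun l : ℕ =>
      ((2 * ((l : 𝕜) + 1) + 1) / (((l : 𝕜) + 1) * (((l : 𝕜) + 1) + 1)) -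
        (2 * ((l : 𝕜) + 1) + 1) / (((l : 𝕜) + 1) * (((l : 𝕜) + 1) + 1) + w)) * a l := by
  have hunscreened (l : ℕ) : ((l : 𝕜) + 1) * (((l : 𝕜) + 1) + 1) ≠ 0 := by
    exact_mod_cast Nat.mul_ne_zero l.succ_ne_zero (l + 1).succ_ne_zero
  have hscreened (l : ℕ) : ((l : 𝕜) + 1) * (((l : 𝕜) + 1) + 1) + w ≠ 0 := by
    exact_mod_cast hw (l + 1)
  simp only [div_sub_div_add (hunscreened _) (hscreened _)]
  refine .of_norm_bounded_eventually_nat (summable_div_succ_sq (2 * ‖w‖ * C)) ?_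
  filter_upwards [eventually_ge_atTop ⌈‖w‖⌉₊] with l hl
  have hwl : ‖w‖ ≤ ((l + 1 : ℕ) : ℝ) ^ 2 := by
    have hceil : ‖w‖ ≤ l := Nat.ceil_le.1 hl
    push_cast
    nlinarith
  have hbound := norm_mul_div_screened_le hwl
  push_cast at hbound
  rw [norm_mul, mul_div_right_comm (2 * ‖w‖)]
  exact mul_le_mul hbound (ha l) (norm_nonneg _) (by positivity)

end Screened

theorem split_representation_general {𝕜 : Type*} [RCLike 𝕜] (w : 𝕜)
    (hw : ∀ l : ℕ, (l : 𝕜) * ((l : 𝕜) + 1) + w ≠ 0) (y : ℝ) (hy₁ : -1 ≤ y) (hy₂ : y < 1) :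
    Summable (fun l : ℕ =>
      ((2 * ((l : 𝕜) + 1) + 1) / (((l : 𝕜) + 1) * (((l : 𝕜) + 1) + 1)) -
        (2 * ((l : 𝕜) + 1) + 1) / (((l : 𝕜) + 1) * (((l : 𝕜) + 1) + 1) + w)) *
          (legendreP (l + 1) y : 𝕜)) ∧
    Tendsto (fun N : ℕ => ∑ l ∈ Finset.range N,
        (2 * (l : 𝕜) + 1) * (legendreP l y : 𝕜) / ((l : 𝕜) * ((l : 𝕜) + 1) + w)) atTop
      (𝓝 (1 / w -
        (∑' l : ℕ,
          ((2 * ((l : 𝕜) + 1) + 1) / (((l : 𝕜) + 1) * (((l : 𝕜) + 1) + 1)) -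
            (2 * ((l : 𝕜) + 1) + 1) / (((l : 𝕜) + 1) * (((l : 𝕜) + 1) + 1) + w)) *
              (legendreP (l + 1) y : 𝕜)) -
        (Real.log (Real.exp 1 / 2 * (1 - y)) : 𝕜))) := by
  have hP : ∀ l, ‖(legendreP (l + 1) y : 𝕜)‖ ≤ 1 := fun l => by
    rw [RCLike.norm_ofReal]
    exact abs_legendreP_le_one (abs_le.2 ⟨hy₁, hy₂.le⟩) _
  have hsummable := summable_screened_coeff_sub_mul hw hP
  refine ⟨hsummable, (tendsto_add_atTop_iff_nat 1).1 ?_⟩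
  have hunscreened := (RCLike.continuous_ofReal (K := 𝕜)).continuousAt.tendsto.comp
    (tendsto_sum_legendreP hy₁ hy₂)
  convert (hunscreened.sub hsummable.hasSum.tendsto_sum_nat).const_add (1 / w) using 2 with N
  · rw [Finset.sum_range_succ', add_comm]
    simp only [Function.comp_apply, RCLike.ofReal_sum, ← Finset.sum_sub_distrib]
    congr 1
    · simp
    · refine Finset.sum_congr rfl fun l _ => ?_
      push_cast
      ring
  · push_cast
    ring

/-- Exact split representation: for `w > 0` and `-1 ≤ y < 1`,
`∑_{l=0}^∞ (2l+1) P l y/(l(l+1)+w)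
  = 1/w - ∑_{l=1}^∞ [(2l+1)/(l(l+1)) - (2l+1)/(l(l+1)+w)] P l y - log((e/2)(1-y))`,
where both series converge. -/
theorem split_representation (w : ℝ) (hw : 0 < w) (y : ℝ) (hy₁ : -1 ≤ y) (hy₂ : y < 1) :
    Summable (fun l : ℕ =>
      ((2 * ((l : ℝ) + 1) + 1) / (((l : ℝ) + 1) * (((l : ℝ) + 1) + 1)) -
        (2 * ((l : ℝ) + 1) + 1) / (((l : ℝ) + 1) * (((l : ℝ) + 1) + 1) + w)) *
          legendreP (l + 1) y) ∧
    Tendsto (fun N : ℕ => ∑ l ∈ Finset.range N,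
        (2 * (l : ℝ) + 1) * legendreP l y / ((l : ℝ) * ((l : ℝ) + 1) + w)) atTop
      (𝓝 (1 / w -
        (∑' l : ℕ,
          ((2 * ((l : ℝ) + 1) + 1) / (((l : ℝ) + 1) * (((l : ℝ) + 1) + 1)) -
            (2 * ((l : ℝ) + 1) + 1) / (((l : ℝ) + 1) * (((l : ℝ) + 1) + 1) + w)) *
              legendreP (l + 1) y) -
        Real.log (Real.exp 1 / 2 * (1 - y)))) := by
  simpa only [RCLike.ofReal_real_eq_id, id] using
    split_representation_general w (fun l => by positivity) y hy₁ hy₂
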